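/- Let g : ℝ → ℝ be a concave function such that g(x) + |x|/2 converges to a finite limit as x → +∞ and to a finite limit as x → −∞ (as holds for the potential g(x) = G(−x/2, x/2) obtained from the degree-1 homogeneous potential G of a PL map of the line). Then the associated measure μ_g is a finite measure on ℝ of total mass exactly 1. -/

import Mathlib

open MeasureTheory Filter

/-!
Let `p` and `q` be the asymptotic slopes of `g` at `-∞` and `+∞`; then
`g x = p x + (q - p) max x 0 + h x` with `h x = o(|x|)`. Test `μ` against the spreading bumps
`x ↦ ψ (c x)`, where `ψ 0 = 1` and `c → 0⁺`. The linear term contributes nothing, and since the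
second derivative of `max x 0` is the Dirac mass at `0`, the second term contributes exactly
`p - q`. The second derivative `c² ψ'' (c x)` of the bump has size `c²` and lives at scale `1 / c`,
so the contribution of `h` tends to `0`. Hence `∫ ψ (c x) ∂μ → p - q`, and since the bumps are
bounded by `1` and converge to `1`, Fatou's lemma identifies the limit with the total mass.
-/

open scoped Topology ENNReal Asymptotics ContDiff

section TotalMass

variable {α ι : Type*} [MeasurableSpace α] {μ : Measure α} {l : Filter ι} [l.IsCountablyGenerated]

lemma tendsto_lintegral_of_tendsto_of_le {F : ι → α → ℝ≥0∞} {f : α → ℝ≥0∞}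
    (hF : ∀ i, AEMeasurable (F i) μ) (hle : ∀ i, F i ≤ᵐ[μ] f)
    (hlim : ∀ᵐ x ∂μ, Tendsto (fun i => F i x) l (𝓝 (f x))) :
    Tendsto (fun i => ∫⁻ x, F i x ∂μ) l (𝓝 (∫⁻ x, f x ∂μ)) := by
  rcases l.eq_or_neBot with rfl | _
  · exact tendsto_bot
  refine tendsto_of_le_liminf_of_limsup_le ?_
    (limsup_le_of_le (h := .of_forall fun i => lintegral_mono_ae (hle i)))
  calc ∫⁻ x, f x ∂μ = ∫⁻ x, liminf (fun i => F i x) l ∂μ :=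
        lintegral_congr_ae (hlim.mono fun _ hx => hx.liminf_eq.symm)
    _ ≤ liminf (fun i => ∫⁻ x, F i x ∂μ) l := lintegral_liminf_le' hF

lemma measure_univ_eq_ofReal_of_tendsto_integral [l.NeBot] {f : ι → α → ℝ} {m : ℝ} (hm : m ≠ 0)
    (hf : ∀ i, AEStronglyMeasurable (f i) μ) (hf0 : ∀ i, 0 ≤ᵐ[μ] f i) (hf1 : ∀ i, f i ≤ᵐ[μ] 1)
    (hlim : ∀ᵐ x ∂μ, Tendsto (fun i => f i x) l (𝓝 1))
    (hint : Tendsto (fun i => ∫ x, f i x ∂μ) l (𝓝 m)) :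
    μ Set.univ = ENNReal.ofReal m := by
  -- A non-integrable `f i` would have Bochner integral `0`, which is excluded close to the limit.
  have hlintegral : ∀ᶠ i in l,
      ENNReal.ofReal (∫ x, f i x ∂μ) = ∫⁻ x, ENNReal.ofReal (f i x) ∂μ := by
    filter_upwards [hint.eventually_ne hm] with i hi
    exact ofReal_integral_eq_lintegral_ofReal (not_imp_comm.1 integral_undef hi) (hf0 i)
  have hmass : Tendsto (fun i => ∫⁻ x, ENNReal.ofReal (f i x) ∂μ) l (𝓝 (∫⁻ _, 1 ∂μ)) :=
    tendsto_lintegral_of_tendsto_of_le (fun i => (hf i).aemeasurable.ennreal_ofReal)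
      (fun i => (hf1 i).mono fun x hx => ENNReal.ofReal_le_one.2 hx)
      (hlim.mono fun x hx => by simpa using ENNReal.tendsto_ofReal hx)
  rw [← lintegral_one]
  exact tendsto_nhds_unique hmass ((ENNReal.tendsto_ofReal hint).congr' hlintegral)

end TotalMass

section SecondDerivative

lemma deriv_deriv_comp_mul_left (ψ : ℝ → ℝ) (c x : ℝ) :
    deriv (deriv fun y => ψ (c * y)) x = c ^ 2 * deriv (deriv ψ) (c * x) := by
  have hderiv : deriv (fun y => ψ (c * y)) = fun y => c * deriv ψ (c * y) :=
    funext (deriv_comp_mul_left c ψ)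
  rw [hderiv, deriv_const_mul_field, deriv_comp_mul_left, smul_eq_mul, sq, mul_assoc]

variable {ψ : ℝ → ℝ}

lemma hasDerivAt_id_mul_deriv_sub (hψ : ContDiff ℝ 2 ψ) (x : ℝ) :
    HasDerivAt (fun x => x * deriv ψ x - ψ x) (x * deriv (deriv ψ) x) x := by
  have hψ' := (hψ.differentiable_deriv_two x).hasDerivAt
  have hF := ((hasDerivAt_id' x).mul hψ').sub (hψ.differentiable two_ne_zero x).hasDerivAt
  rwa [one_mul, add_sub_cancel_left] at hF

lemma continuous_deriv_deriv (hψ : ContDiff ℝ 2 ψ) : Continuous (deriv (deriv ψ)) :=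
  (ContDiff.deriv' (n := 1) hψ).continuous_deriv_one

lemma integrable_mul_deriv_deriv {g : ℝ → ℝ} (hg : LocallyIntegrable g)
    (hψ : ContDiff ℝ 2 ψ) (hψc : HasCompactSupport ψ) :
    Integrable fun x => g x * deriv (deriv ψ) x :=
  hg.integrable_smul_right_of_hasCompactSupport (continuous_deriv_deriv hψ) hψc.deriv.deriv

lemma integrable_id_mul_deriv_deriv (hψ : ContDiff ℝ 2 ψ) (hψc : HasCompactSupport ψ) :
    Integrable fun x => x * deriv (deriv ψ) x :=
  integrable_mul_deriv_deriv continuous_id.locallyIntegrable hψ hψc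

lemma integral_id_mul_deriv_deriv (hψ : ContDiff ℝ 2 ψ) (hψc : HasCompactSupport ψ) :
    ∫ x, x * deriv (deriv ψ) x = 0 :=
  integral_eq_zero_of_hasDerivAt_of_integrable (hasDerivAt_id_mul_deriv_sub hψ)
    (integrable_id_mul_deriv_deriv hψ hψc)
    (Continuous.integrable_of_hasCompactSupport
      ((continuous_id.mul (hψ.continuous_deriv one_le_two)).sub hψ.continuous)
      (hψc.deriv.mul_left.sub hψc))

lemma integral_max_zero_mul_deriv_deriv (hψ : ContDiff ℝ 2 ψ) (hψc : HasCompactSupport ψ) :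
    ∫ x, max x 0 * deriv (deriv ψ) x = ψ 0 := by
  have hindicator : (fun x => max x 0 * deriv (deriv ψ) x) =
      (Set.Ioi 0).indicator fun x => x * deriv (deriv ψ) x := by
    ext x
    rcases le_or_gt x 0 with hx | hx
    · simp [hx]
    · simp [hx, hx.le]
  have hsupp : HasCompactSupport fun x => x * deriv ψ x - ψ x := hψc.deriv.mul_left.sub hψc
  rw [hindicator, integral_indicator measurableSet_Ioi,
    integral_Ioi_of_hasDerivAt_of_tendsto' (fun x _ => hasDerivAt_id_mul_deriv_sub hψ x)
      (integrable_id_mul_deriv_deriv hψ hψc).integrableOn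
      (hsupp.is_zero_at_infty.mono_left atTop_le_cocompact)]
  simp

lemma integral_mul_deriv_deriv_eq_integral_sub_add {g : ℝ → ℝ} (hg : LocallyIntegrable g) (p r : ℝ)
    (hψ : ContDiff ℝ 2 ψ) (hψc : HasCompactSupport ψ) :
    ∫ x, g x * deriv (deriv ψ) x =
      (∫ x, (g x - (p * x + r * max x 0)) * deriv (deriv ψ) x) + r * ψ 0 := by
  have hid := (integrable_id_mul_deriv_deriv hψ hψc).const_mul p
  have hmax : Integrable fun x => r * (max x 0 * deriv (deriv ψ) x) :=
    (integrable_mul_deriv_deriv (by fun_prop : Continuous fun x : ℝ => max x 0).locallyIntegrable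
      hψ hψc).const_mul r
  have hsum : Integrable fun x =>
      p * (x * deriv (deriv ψ) x) + r * (max x 0 * deriv (deriv ψ) x) := hid.add hmax
  have hpiecewise : ∫ x, (p * (x * deriv (deriv ψ) x) + r * (max x 0 * deriv (deriv ψ) x)) =
      r * ψ 0 := by
    rw [integral_add hid hmax, integral_const_mul, integral_const_mul,
      integral_id_mul_deriv_deriv hψ hψc, integral_max_zero_mul_deriv_deriv hψ hψc, mul_zero,
      zero_add]
  rw [← hpiecewise, ← sub_eq_iff_eq_add,
    ← integral_sub (integrable_mul_deriv_deriv hg hψ hψc) hsum]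
  congr with x
  ring

end SecondDerivative

section Rescaling

lemma exists_integrable_norm_le_of_isLittleO {E F : Type*} [NormedAddCommGroup E] [ProperSpace E]
    [MeasurableSpace E] [OpensMeasurableSpace E] [NormedAddCommGroup F] {μ : Measure E} {h : E → F}
    (hh : LocallyIntegrable h μ) (ho : h =o[Bornology.cobounded E] (id : E → E)) {ε : ℝ}
    (hε : 0 < ε) :
    ∃ u : E → F, Integrable u μ ∧ ∀ x, ‖h x‖ ≤ ‖u x‖ + ε * ‖x‖ := by
  obtain ⟨R, -, hR⟩ := (hasBasis_cobounded_norm.eventually_iff).1 (ho.def hε)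
  refine ⟨(Metric.closedBall 0 R).indicator h,
    (hh.integrableOn_isCompact (isCompact_closedBall 0 R)).integrable_indicator
      measurableSet_closedBall, fun x => ?_⟩
  by_cases hx : x ∈ Metric.closedBall 0 R
  · rw [Set.indicator_of_mem hx]
    exact le_add_of_nonneg_right (by positivity)
  · rw [Set.indicator_of_notMem hx, norm_zero, zero_add]
    exact hR (le_of_lt (by simpa using hx))

variable {h η : ℝ → ℝ} {M : ℝ}

lemma abs_integral_mul_rescale_le {u : ℝ → ℝ} {c ε : ℝ} (hc : 0 < c) (hu : Integrable u)
    (hh : ∀ x, |h x| ≤ |u x| + ε * |x|) (hηM : ∀ y, |η y| ≤ M)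
    (hη : Integrable fun y => |y| * |η y|) :
    |∫ x, h x * (c ^ 2 * η (c * x))| ≤ c ^ 2 * (M * ∫ x, |u x|) + ε * ∫ y, |y| * |η y| := by
  have hu_int : Integrable fun x => c ^ 2 * (M * |u x|) := (hu.abs.const_mul M).const_mul _
  have hη_int : Integrable fun x => ε * (c * (|c * x| * |η (c * x)|)) :=
    ((hη.comp_mul_left' hc.ne').const_mul c).const_mul ε
  have hbound (x : ℝ) : |h x * (c ^ 2 * η (c * x))| ≤
      c ^ 2 * (M * |u x|) + ε * (c * (|c * x| * |η (c * x)|)) :=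
    calc |h x * (c ^ 2 * η (c * x))| = |h x| * (c ^ 2 * |η (c * x)|) := by
          rw [abs_mul, abs_mul, abs_sq]
      _ ≤ (|u x| + ε * |x|) * (c ^ 2 * |η (c * x)|) := by gcongr; exact hh x
      _ = c ^ 2 * (|η (c * x)| * |u x|) + ε * (c * (|c * x| * |η (c * x)|)) := by
          rw [abs_mul, abs_of_pos hc]; ring
      _ ≤ c ^ 2 * (M * |u x|) + ε * (c * (|c * x| * |η (c * x)|)) := by gcongr; exact hηM _
  calc |∫ x, h x * (c ^ 2 * η (c * x))|
      ≤ ∫ x, (c ^ 2 * (M * |u x|) + ε * (c * (|c * x| * |η (c * x)|))) :=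
        norm_integral_le_of_norm_le (f := fun x => h x * (c ^ 2 * η (c * x))) (hu_int.add hη_int)
          (ae_of_all _ hbound)
    _ = c ^ 2 * (M * ∫ x, |u x|) + ε * ∫ y, |y| * |η y| := by
        rw [integral_add hu_int hη_int]
        simp only [integral_const_mul]
        rw [Measure.integral_comp_mul_left (fun y => |y| * |η y|) c, abs_of_pos (inv_pos.2 hc),
          smul_eq_mul, mul_inv_cancel_left₀ hc.ne']

lemma tendsto_integral_mul_rescale_of_isLittleO (hh : LocallyIntegrable h)
    (ho : h =o[Bornology.cobounded ℝ] (id : ℝ → ℝ)) (hηM : ∀ y, |η y| ≤ M)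
    (hη : Integrable fun y => |y| * |η y|) :
    Tendsto (fun c => ∫ x, h x * (c ^ 2 * η (c * x))) (𝓝[>] 0) (𝓝 0) := by
  rw [Metric.tendsto_nhds]
  intro δ hδ
  obtain ⟨ε, hε, hεδ⟩ := exists_pos_mul_lt hδ (∫ y, |y| * |η y|)
  obtain ⟨u, hu, hhu⟩ := exists_integrable_norm_le_of_isLittleO hh ho hε
  have hlim : Tendsto (fun c : ℝ => c ^ 2 * (M * ∫ x, |u x|) + ε * ∫ y, |y| * |η y|) (𝓝[>] 0)
      (𝓝 (ε * ∫ y, |y| * |η y|)) :=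
    tendsto_nhdsWithin_of_tendsto_nhds (Continuous.tendsto' (by fun_prop) _ _ (by simp))
  filter_upwards [hlim.eventually_lt_const (mul_comm ε _ ▸ hεδ), self_mem_nhdsWithin] with c hcδ hc
  rw [dist_zero_right]
  exact (abs_integral_mul_rescale_le hc hu hhu hηM hη).trans_lt hcδ

end Rescaling

section Slopes

variable {g ψ : ℝ → ℝ} {p q : ℝ}

lemma isLittleO_sub_of_tendsto_div (hbot : Tendsto (fun x => g x / x) atBot (𝓝 p))
    (htop : Tendsto (fun x => g x / x) atTop (𝓝 q)) :
    (fun x => g x - (p * x + (q - p) * max x 0)) =o[Bornology.cobounded ℝ] (id : ℝ → ℝ) := by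
  have hslope {l : Filter ℝ} {a : ℝ} (hl : ∀ᶠ x in l, x ≠ 0)
      (ha : ∀ᶠ x in l, p * x + (q - p) * max x 0 = a * x)
      (hlim : Tendsto (fun x => g x / x) l (𝓝 a)) :
      (fun x => g x - (p * x + (q - p) * max x 0)) =o[l] (id : ℝ → ℝ) := by
    refine Asymptotics.isLittleO_of_tendsto' (hl.mono fun x hx h0 => absurd h0 hx) ?_
    refine (tendsto_sub_nhds_zero_iff.2 hlim).congr' ?_
    filter_upwards [hl, ha] with x hx hax
    rw [hax, id, sub_div, mul_div_cancel_right₀ a hx]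
  rw [IsOrderBornology.cobounded_eq, Asymptotics.isLittleO_sup]
  constructor
  · refine hslope (eventually_ne_atBot 0) ?_ hbot
    filter_upwards [eventually_le_atBot 0] with x hx
    simp [hx]
  · refine hslope (eventually_ne_atTop 0) ?_ htop
    filter_upwards [eventually_ge_atTop 0] with x hx
    rw [max_eq_left hx]
    ring

lemma tendsto_div_of_tendsto_add {f : ℝ → ℝ} {l : Filter ℝ} {a L : ℝ}
    (hl : l ≤ Bornology.cobounded ℝ) (hgf : Tendsto (fun x => g x + f x) l (𝓝 L))
    (hf : ∀ᶠ x in l, f x = -(a * x)) : Tendsto (fun x => g x / x) l (𝓝 a) := by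
  have hlim : Tendsto (fun x => (g x + f x) * x⁻¹ + a) l (𝓝 (L * 0 + a)) :=
    (hgf.mul (tendsto_inv₀_cobounded.mono_left hl)).add_const a
  rw [mul_zero, zero_add] at hlim
  refine hlim.congr' ?_
  filter_upwards [hf, hl (Bornology.eventually_ne_cobounded 0)] with x hfx hx
  rw [hfx]
  field_simp
  ring

lemma tendsto_div_atTop_of_tendsto_add_abs_div {k L : ℝ}
    (hg : Tendsto (fun x => g x + |x| / k) atTop (𝓝 L)) :
    Tendsto (fun x => g x / x) atTop (𝓝 (-(1 / k))) :=
  tendsto_div_of_tendsto_add IsOrderBornology.atTop_le_cobounded hg <|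
    (eventually_ge_atTop 0).mono fun x hx => by rw [abs_of_nonneg hx]; ring

lemma tendsto_div_atBot_of_tendsto_add_abs_div {k L : ℝ}
    (hg : Tendsto (fun x => g x + |x| / k) atBot (𝓝 L)) :
    Tendsto (fun x => g x / x) atBot (𝓝 (1 / k)) :=
  tendsto_div_of_tendsto_add IsOrderBornology.atBot_le_cobounded hg <|
    (eventually_le_atBot 0).mono fun x hx => by rw [abs_of_nonpos hx]; ring

lemma tendsto_integral_mul_deriv_deriv_rescale (hg : LocallyIntegrable g)
    (hbot : Tendsto (fun x => g x / x) atBot (𝓝 p)) (htop : Tendsto (fun x => g x / x) atTop (𝓝 q))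
    (hψ : ContDiff ℝ 2 ψ) (hψc : HasCompactSupport ψ) :
    Tendsto (fun c => ∫ x, g x * deriv (deriv fun y => ψ (c * y)) x) (𝓝[>] 0)
      (𝓝 ((q - p) * ψ 0)) := by
  have hremainder : LocallyIntegrable fun x => g x - (p * x + (q - p) * max x 0) :=
    hg.sub (by fun_prop : Continuous fun x : ℝ => p * x + (q - p) * max x 0).locallyIntegrable
  obtain ⟨M, hM⟩ := hψc.deriv.deriv.exists_bound_of_continuous (continuous_deriv_deriv hψ)
  have hmoment : Integrable fun y => |y| * |deriv (deriv ψ) y| := by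
    simpa only [abs_mul] using (integrable_id_mul_deriv_deriv hψ hψc).abs
  have hlim := (tendsto_integral_mul_rescale_of_isLittleO hremainder
    (isLittleO_sub_of_tendsto_div hbot htop) hM hmoment).add_const ((q - p) * ψ 0)
  rw [zero_add] at hlim
  refine hlim.congr' ?_
  filter_upwards [self_mem_nhdsWithin] with c (hc : 0 < c)
  have hψ_rescale : ContDiff ℝ 2 fun y => ψ (c * y) := hψ.comp (contDiff_const.mul contDiff_id)
  have hψc_rescale : HasCompactSupport fun y => ψ (c * y) :=
    hψc.comp_homeomorph (.mulLeft₀ c hc.ne')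
  rw [integral_mul_deriv_deriv_eq_integral_sub_add hg p (q - p) hψ_rescale hψc_rescale]
  simp only [deriv_deriv_comp_mul_left, mul_zero]

end Slopes

theorem stmt_13_general {g : ℝ → ℝ} (hg : LocallyIntegrable g) {p q : ℝ} (hpq : p ≠ q)
    (hbot : Tendsto (fun x => g x / x) atBot (𝓝 p)) (htop : Tendsto (fun x => g x / x) atTop (𝓝 q))
    {μ : Measure ℝ}
    (hμ : ∀ φ : ℝ → ℝ, ContDiff ℝ ∞ φ → HasCompactSupport φ →
      ∫ x, φ x ∂μ = -∫ x, g x * deriv (deriv φ) x) :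
    μ Set.univ = ENNReal.ofReal (p - q) := by
  let ψ : ContDiffBump (0 : ℝ) := ⟨1, 2, one_pos, one_lt_two⟩
  have hψ0 : ψ 0 = 1 := ψ.one_of_mem_closedBall (Metric.mem_closedBall_self zero_le_one)
  have hψ_rescale (c : ℝ) : ContDiff ℝ ∞ fun x => ψ (c * x) :=
    ψ.contDiff.comp (contDiff_const.mul contDiff_id)
  have hpairing := (tendsto_integral_mul_deriv_deriv_rescale hg hbot htop ψ.contDiff
    ψ.hasCompactSupport).neg
  rw [hψ0, mul_one, neg_sub] at hpairing
  refine measure_univ_eq_ofReal_of_tendsto_integral (l := 𝓝[>] (0 : ℝ))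
    (f := fun c x => ψ (c * x)) (sub_ne_zero.2 hpq)
    (fun c => (hψ_rescale c).continuous.aestronglyMeasurable)
    (fun c => ae_of_all _ fun x => ψ.nonneg) (fun c => ae_of_all _ fun x => ψ.le_one)
    (ae_of_all _ fun x => ?_) (hpairing.congr' ?_)
  · exact tendsto_nhdsWithin_of_tendsto_nhds
      ((ψ.continuous.comp (continuous_mul_const x)).tendsto' _ _ (by simp [hψ0]))
  · filter_upwards [self_mem_nhdsWithin] with c (hc : 0 < c)
    have hψc_rescale : HasCompactSupport fun x => ψ (c * x) :=
      ψ.hasCompactSupport.comp_homeomorph (.mulLeft₀ c hc.ne')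
    exact (hμ _ (hψ_rescale c) hψc_rescale).symm

/-- If `g : ℝ → ℝ` is concave and `g(x) + |x|/2` converges to finite limits
as `x → +∞` and as `x → −∞` (as for the potential of a PL map of the line), then the
associated second-derivative measure `μ_g` is a finite measure of total mass exactly 1. -/
theorem stmt_13 (g : ℝ → ℝ) (hg : ConcaveOn ℝ Set.univ g)
    (L₁ L₂ : ℝ)
    (htop : Tendsto (fun x => g x + |x| / 2) atTop (nhds L₁))
    (hbot : Tendsto (fun x => g x + |x| / 2) atBot (nhds L₂))
    (μ : Measure ℝ)
    (hμ : ∀ φ : ℝ → ℝ, ContDiff ℝ (⊤ : ℕ∞) φ → HasCompactSupport φ →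
      ∫ x, φ x ∂μ = -∫ x, g x * deriv (deriv φ) x) :
    μ Set.univ = 1 := by
  have hgc : Continuous g := continuousOn_univ.1 (hg.continuousOn isOpen_univ)
  exact (stmt_13_general hgc.locallyIntegrable (by norm_num)
    (tendsto_div_atBot_of_tendsto_add_abs_div hbot) (tendsto_div_atTop_of_tendsto_add_abs_div htop)
    hμ).trans (by norm_num)
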